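/- (Structural theorem.) Let n ≥ 2, ε ∈ (0,1], τ ∈ (0,1), and let G = (V,E) be a finite simple graph satisfying: (1) |E| ≥ 4n/(τ²ε⁴); (2) |E| ≥ 16n/((1−τ)²ε⁴); and (3) c(G)/|E|² ≤ (1−τ)²ε²/(16·√n). Then the collision-based tester (G,τ) is an (n,ε)-uniformity tester: for the uniform vector P, Pr[Z < T] ≥ 3/4, and for every probability vector P on [n] with ∑_i |P i − 1/n| ≥ ε, Pr[Z ≥ T] ≥ 3/4, where T = |E|·(1+τε²)/n. -/

import Mathlib

open Finset

open Classical in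
/-- Probability of the event `A` under the product distribution on `Ω = V → Fin n`,
where the coordinates are independent and each has law the probability vector `P`. -/
noncomputable def pr {V : Type*} [Fintype V] [DecidableEq V] {n : ℕ}
    (P : Fin n → ℝ) (A : (V → Fin n) → Prop) : ℝ :=
  ∑ ω : V → Fin n, if A ω then ∏ v, P (ω v) else 0

/-- Expectation of `f` under the product distribution. -/
noncomputable def ex {V : Type*} [Fintype V] [DecidableEq V] {n : ℕ}
    (P : Fin n → ℝ) (f : (V → Fin n) → ℝ) : ℝ :=
  ∑ ω : V → Fin n, (∏ v, P (ω v)) * f ω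

/-- Variance of `f` under the product distribution. -/
noncomputable def var {V : Type*} [Fintype V] [DecidableEq V] {n : ℕ}
    (P : Fin n → ℝ) (f : (V → Fin n) → ℝ) : ℝ :=
  ex P (fun ω => (f ω - ex P f) ^ 2)

/-- The collision count `Z(ω) = ∑_{{u,v} ∈ E} 1[ω u = ω v]`. -/
noncomputable def collisions {V : Type*} [Fintype V] [DecidableEq V] {n : ℕ}
    (G : SimpleGraph V) [DecidableRel G.Adj] (ω : V → Fin n) : ℝ :=
  ∑ e ∈ G.edgeFinset,
    Sym2.lift ⟨fun u v => if ω u = ω v then (1 : ℝ) else 0,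
      fun u v => by by_cases h : ω u = ω v <;> simp [h, eq_comm]⟩ e

/-- The number of edges `|E|` of the comparison graph. -/
def edgeCount {V : Type*} [Fintype V] [DecidableEq V]
    (G : SimpleGraph V) [DecidableRel G.Adj] : ℕ :=
  G.edgeFinset.card

/-- The number of ordered 2-paths `c(G) = ∑_v d(v)·(d(v) − 1)`. -/
def twoPaths {V : Type*} [Fintype V]
    (G : SimpleGraph V) [DecidableRel G.Adj] : ℕ :=
  ∑ v, G.degree v * (G.degree v - 1)

/-- The collision-based tester `(G, τ)` is an `(n, ε)`-uniformity tester: with threshold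
`T = |E|·(1+τε²)/n`, on the uniform vector the collision count satisfies `Z < T` with
probability at least `3/4`, and on every probability vector that is ε-far from uniform
(in ℓ₁) the collision count satisfies `Z ≥ T` with probability at least `3/4`. -/
def IsUniformityTester {V : Type*} [Fintype V] [DecidableEq V]
    (n : ℕ) (ε τ : ℝ) (G : SimpleGraph V) [DecidableRel G.Adj] : Prop :=
  (3 / 4 ≤ pr (fun _ : Fin n => (1 : ℝ) / n)
      (fun ω : V → Fin n =>
        collisions G ω < (edgeCount G : ℝ) * (1 + τ * ε ^ 2) / n)) ∧
  (∀ P : Fin n → ℝ, (∀ i, 0 ≤ P i) → (∑ i, P i) = 1 →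
    ε ≤ (∑ i, |P i - 1 / (n : ℝ)|) →
    3 / 4 ≤ pr P (fun ω : V → Fin n =>
      (edgeCount G : ℝ) * (1 + τ * ε ^ 2) / n ≤ collisions G ω))

/-!
Write `θ = ‖P‖₂²` and `δ = ‖P - U‖₂²`, so that `θ = 1/n + δ` and `E Z = |E| θ`. Hoeffding's
decomposition splits `Z - E Z` into the vertex terms `d(v) (P(ω v) - θ)` and one degenerate term
for each edge. All of these are uncorrelated, so
`Var Z = |E| (θ - θ²) + c(G) (‖P‖₃³ - θ²)`, and recentring at `1/n` gives
`‖P‖₃³ - θ² ≤ δ/n + δ^(3/2)`. If `P` is `ε`-far from uniform, then `ε² ≤ n δ` by Cauchy–Schwarz,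
and the three conditions on `G` make `4 Var Z` at most the square of the distance from `E Z` to
the threshold `T`, or to a point between them. Chebyshev's inequality concludes.
-/

section Expectation

variable {V : Type*} [Fintype V] [DecidableEq V] {n : ℕ} {P : Fin n → ℝ}

lemma ex_add (f g : (V → Fin n) → ℝ) :
    ex P (fun ω => f ω + g ω) = ex P f + ex P g := by
  simp only [ex, mul_add, sum_add_distrib]

lemma ex_const_mul (c : ℝ) (f : (V → Fin n) → ℝ) :
    ex P (fun ω => c * f ω) = c * ex P f := by
  simp only [ex, mul_left_comm _ c, ← mul_sum]

lemma ex_sum {ι : Type*} (s : Finset ι) (f : ι → (V → Fin n) → ℝ) :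
    ex P (fun ω => ∑ i ∈ s, f i ω) = ∑ i ∈ s, ex P (f i) := by
  simp only [ex, mul_sum]
  exact sum_comm

lemma ex_const (hP : ∑ i, P i = 1) (c : ℝ) : ex P (fun _ : V → Fin n => c) = c := by
  rw [ex, ← sum_mul, ← Fintype.prod_sum fun (_ : V) i => P i]
  simp [hP]

lemma prod_apply_update_mul (ω : V → Fin n) (v : V) (i : Fin n) :
    (∏ u, P (Function.update ω v i u)) * P (ω v) = (∏ u, P (ω u)) * P i := by
  rw [← mul_prod_erase univ _ (mem_univ v),
    ← mul_prod_erase univ (fun u => P (ω u)) (mem_univ v), Function.update_self]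
  rw [prod_congr rfl fun u hu => by rw [Function.update_of_ne (ne_of_mem_erase hu)]]
  ring

lemma ex_eq_ex_update (hP : ∑ i, P i = 1) (v : V) (f : (V → Fin n) → ℝ) :
    ex P f = ex P (fun ω => ∑ i, P i * f (Function.update ω v i)) := by
  -- Exchange the coordinate `ω v` with an independent fresh sample `i`.
  have swap_involutive : Function.Involutive
      (fun x : (V → Fin n) × Fin n => (Function.update x.1 v x.2, x.1 v)) := by
    rintro ⟨ω, i⟩
    simp
  calc ex P f = ∑ x : (V → Fin n) × Fin n, (∏ u, P (x.1 u)) * P x.2 * f x.1 := by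
        simp only [ex, Fintype.sum_prod_type, ← sum_mul, ← mul_sum, hP, mul_one]
    _ = ∑ x : (V → Fin n) × Fin n,
          (∏ u, P (x.1 u)) * P x.2 * f (Function.update x.1 v x.2) := by
        rw [← Equiv.sum_comp swap_involutive.toPerm]
        simp only [Function.Involutive.coe_toPerm, prod_apply_update_mul]
    _ = ex P (fun ω => ∑ i, P i * f (Function.update ω v i)) := by
        simp only [ex, Fintype.sum_prod_type, mul_sum, mul_assoc]

lemma ex_apply (hP : ∑ i, P i = 1) (v : V) (g : Fin n → ℝ) :
    ex P (fun ω : V → Fin n => g (ω v)) = ∑ x, P x * g x := by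
  rw [ex_eq_ex_update hP v]
  simp only [Function.update_self, ex_const hP]

lemma ex_map_sym2 (hP : ∑ i, P i = 1) {e : Sym2 V} (he : ¬ e.IsDiag) (K : Sym2 (Fin n) → ℝ) :
    ex P (fun ω : V → Fin n => K (e.map ω)) = ∑ x, P x * ∑ y, P y * K s(x, y) := by
  induction e with | _ u v
  rw [Sym2.mk_isDiag_iff] at he
  rw [ex_eq_ex_update hP v]
  simp only [Sym2.map_mk, Function.update_self, Function.update_of_ne he]
  exact ex_apply hP u fun x => ∑ y, P y * K s(x, y)

end Expectation

section Chebyshev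

variable {V : Type*} [Fintype V] [DecidableEq V] {n : ℕ} {P : Fin n → ℝ}

lemma pr_add_pr_not (hP : ∑ i, P i = 1) (A : (V → Fin n) → Prop) :
    pr P A + pr P (fun ω => ¬ A ω) = 1 := by
  rw [← ex_const (V := V) hP 1, pr, pr, ex, ← sum_add_distrib]
  refine sum_congr rfl fun ω _ => ?_
  by_cases h : A ω <;> simp [h]

lemma pr_mul_le_ex (hP0 : ∀ i, 0 ≤ P i) {A : (V → Fin n) → Prop} {f : (V → Fin n) → ℝ} {a : ℝ}
    (hf : ∀ ω, 0 ≤ f ω) (hA : ∀ ω, A ω → a ≤ f ω) : pr P A * a ≤ ex P f := by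
  rw [pr, ex, sum_mul]
  refine sum_le_sum fun ω _ => ?_
  have hweight : 0 ≤ ∏ v, P (ω v) := prod_nonneg fun v _ => hP0 _
  split_ifs with h
  · exact mul_le_mul_of_nonneg_left (hA ω h) hweight
  · rw [zero_mul]
    exact mul_nonneg hweight (hf ω)

lemma one_sub_var_div_sq_le_pr (hP0 : ∀ i, 0 ≤ P i) (hP : ∑ i, P i = 1)
    {A : (V → Fin n) → Prop} {f : (V → Fin n) → ℝ} {a : ℝ} (ha : 0 < a)
    (hA : ∀ ω, ¬ A ω → a ≤ |f ω - ex P f|) : 1 - var P f / a ^ 2 ≤ pr P A := by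
  have hmarkov : pr P (fun ω => ¬ A ω) * a ^ 2 ≤ var P f :=
    pr_mul_le_ex hP0 (fun ω => sq_nonneg _) fun ω hω =>
      sq_le_sq.mpr ((abs_of_pos ha).trans_le (hA ω hω))
  rw [← le_div_iff₀ (by positivity)] at hmarkov
  linarith [pr_add_pr_not hP A]

lemma three_quarters_le_pr_of_four_mul_var_le (hP0 : ∀ i, 0 ≤ P i) (hP : ∑ i, P i = 1)
    {A : (V → Fin n) → Prop} {f : (V → Fin n) → ℝ} {a : ℝ} (ha : 0 < a)
    (hvar : 4 * var P f ≤ a ^ 2) (hA : ∀ ω, ¬ A ω → a ≤ |f ω - ex P f|) : 3 / 4 ≤ pr P A := by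
  have hratio : var P f / a ^ 2 ≤ 1 / 4 := by
    rw [div_le_iff₀ (by positivity)]
    linarith
  linarith [one_sub_var_div_sq_le_pr hP0 hP ha hA]

end Chebyshev

section Hoeffding

variable {V : Type*} [DecidableEq V] {n : ℕ} {P : Fin n → ℝ}

lemma ex_sum_sq_of_orthogonal [Fintype V] {ι : Type*} {s : Finset ι} {f : ι → (V → Fin n) → ℝ}
    (hf : (s : Set ι).Pairwise fun i j => ex P (fun ω => f i ω * f j ω) = 0) :
    ex P (fun ω => (∑ i ∈ s, f i ω) ^ 2) = ∑ i ∈ s, ex P (fun ω => f i ω ^ 2) := by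
  simp only [sq, sum_mul_sum, ex_sum]
  refine sum_congr rfl fun i hi => sum_eq_single_of_mem i hi fun j hj hji => ?_
  exact hf hi hj hji.symm

/-- `f` is a component of index `A` in the Hoeffding (Efron–Stein) decomposition of functions of
independent samples: it depends on the coordinates in `A` only, and averaging out any one of them
gives zero. -/
structure IsHoeffdingComponent (P : Fin n → ℝ) (A : Set V) (f : (V → Fin n) → ℝ) : Prop where
  dependsOn : DependsOn f A
  sum_update_eq_zero : ∀ v ∈ A, ∀ ω, ∑ i, P i * f (Function.update ω v i) = 0

namespace IsHoeffdingComponent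

lemma const_mul {A : Set V} {f : (V → Fin n) → ℝ} (hf : IsHoeffdingComponent P A f) (c : ℝ) :
    IsHoeffdingComponent P A (fun ω => c * f ω) where
  dependsOn _ _ h := by simp only [hf.dependsOn h]
  sum_update_eq_zero v hv ω := by
    simp only [mul_left_comm _ c, ← mul_sum, hf.sum_update_eq_zero v hv ω, mul_zero]

lemma apply {g : Fin n → ℝ} (hg : ∑ x, P x * g x = 0) (v : V) :
    IsHoeffdingComponent P {v} (fun ω => g (ω v)) where
  dependsOn _ _ h := by simp only [h v rfl]
  sum_update_eq_zero := by
    rintro _ rfl ω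
    simpa only [Function.update_self] using hg

lemma map_sym2 {K : Sym2 (Fin n) → ℝ} (hK : ∀ x, ∑ y, P y * K s(x, y) = 0)
    {e : Sym2 V} (he : ¬ e.IsDiag) :
    IsHoeffdingComponent P (e : Set V) (fun ω => K (e.map ω)) where
  dependsOn _ _ h := by simp only [Sym2.map_congr h]
  sum_update_eq_zero v hv ω := by
    obtain ⟨u, rfl⟩ := Sym2.mem_iff_exists.mp hv
    rw [Sym2.mk_isDiag_iff] at he
    simp only [Sym2.map_mk, Function.update_self, Function.update_of_ne (Ne.symm he)]
    simpa only [Sym2.eq_swap] using hK (ω u)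

lemma ex_mul_eq_zero_of_not_subset [Fintype V] (hP : ∑ i, P i = 1) {A B : Set V}
    {f g : (V → Fin n) → ℝ} (hf : IsHoeffdingComponent P A f) (hg : IsHoeffdingComponent P B g)
    (hAB : ¬ A ⊆ B) :
    ex P (fun ω => f ω * g ω) = 0 := by
  obtain ⟨v, hvA, hvB⟩ := Set.not_subset.mp hAB
  have hg_update : ∀ ω i, g (Function.update ω v i) = g ω := fun ω i =>
    hg.dependsOn fun u hu => Function.update_of_ne (ne_of_mem_of_not_mem hu hvB) _ _
  rw [ex_eq_ex_update hP v]
  simp only [hg_update, ← mul_assoc, ← sum_mul, hf.sum_update_eq_zero v hvA, zero_mul,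
    ex_const hP]

lemma ex_mul_eq_zero [Fintype V] (hP : ∑ i, P i = 1) {A B : Set V} {f g : (V → Fin n) → ℝ}
    (hf : IsHoeffdingComponent P A f) (hg : IsHoeffdingComponent P B g) (hAB : A ≠ B) :
    ex P (fun ω => f ω * g ω) = 0 := by
  by_cases hsub : A ⊆ B
  · simp only [mul_comm (f _)]
    exact ex_mul_eq_zero_of_not_subset hP hg hf fun h => hAB (hsub.antisymm h)
  · exact ex_mul_eq_zero_of_not_subset hP hf hg hsub

end IsHoeffdingComponent

end Hoeffding

section Kernel

variable {n : ℕ}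

/-- The conditional expectation of `K s(X, Y)` given `X = x`, for `X` and `Y` independent of
law `P`. A symmetric kernel on `Fin n` is encoded as a function on `Sym2 (Fin n)`. -/
def kernelProj (P : Fin n → ℝ) (K : Sym2 (Fin n) → ℝ) (x : Fin n) : ℝ :=
  ∑ y, P y * K s(x, y)

/-- The expectation of `K s(X, Y)` for `X` and `Y` independent of law `P`. -/
def kernelMean (P : Fin n → ℝ) (K : Sym2 (Fin n) → ℝ) : ℝ :=
  ∑ x, P x * kernelProj P K x

/-- The degenerate part `K(x, y) - K₁(x) - K₁(y) + θ` of the kernel `K`, where `K₁` is its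
projection and `θ` its mean: the pair component in the Hoeffding decomposition of `K s(X, Y)`. -/
def kernelDegenerate (P : Fin n → ℝ) (K : Sym2 (Fin n) → ℝ) : Sym2 (Fin n) → ℝ :=
  Sym2.lift ⟨fun x y => K s(x, y) - (kernelProj P K x + kernelProj P K y) + kernelMean P K,
    fun x y => by beta_reduce; rw [Sym2.eq_swap, add_comm (kernelProj P K x)]⟩

variable {P : Fin n → ℝ}

lemma kernelDegenerate_mk (K : Sym2 (Fin n) → ℝ) (x y : Fin n) :
    kernelDegenerate P K s(x, y)
      = K s(x, y) - (kernelProj P K x + kernelProj P K y) + kernelMean P K := rfl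

lemma sum_mul_kernelProj_sub_kernelMean (hP : ∑ i, P i = 1) (K : Sym2 (Fin n) → ℝ) :
    ∑ x, P x * (kernelProj P K x - kernelMean P K) = 0 := by
  simp only [mul_sub, sum_sub_distrib, ← sum_mul, hP, one_mul, kernelMean, sub_self]

lemma sum_mul_kernelProj_sub_kernelMean_sq (hP : ∑ i, P i = 1) (K : Sym2 (Fin n) → ℝ) :
    ∑ x, P x * (kernelProj P K x - kernelMean P K) ^ 2
      = ∑ x, P x * kernelProj P K x ^ 2 - kernelMean P K ^ 2 := by
  set θ := kernelMean P K with hθ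
  calc ∑ x, P x * (kernelProj P K x - θ) ^ 2
      = ∑ x, (P x * kernelProj P K x ^ 2 - 2 * θ * (P x * kernelProj P K x) + P x * θ ^ 2) :=
        sum_congr rfl fun x _ => by ring
    _ = ∑ x, P x * kernelProj P K x ^ 2 - 2 * θ * θ + θ ^ 2 := by
        rw [sum_add_distrib, sum_sub_distrib, ← mul_sum, ← sum_mul, hP, one_mul, hθ, kernelMean]
    _ = ∑ x, P x * kernelProj P K x ^ 2 - θ ^ 2 := by ring

lemma sum_mul_kernelDegenerate (hP : ∑ i, P i = 1) (K : Sym2 (Fin n) → ℝ) (x : Fin n) :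
    ∑ y, P y * kernelDegenerate P K s(x, y) = 0 := by
  simp only [kernelDegenerate_mk, mul_add, mul_sub, sum_add_distrib, sum_sub_distrib, ← sum_mul,
    hP, one_mul]
  simp only [kernelProj, kernelMean]
  ring

lemma sum_sum_kernel_mul_left (K : Sym2 (Fin n) → ℝ) (h : Fin n → ℝ) :
    ∑ x, P x * ∑ y, P y * (K s(x, y) * h x) = ∑ x, P x * (kernelProj P K x * h x) := by
  simp only [kernelProj, sum_mul, mul_assoc]

lemma sum_sum_kernel_mul_right (K : Sym2 (Fin n) → ℝ) (h : Fin n → ℝ) :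
    ∑ x, P x * ∑ y, P y * (K s(x, y) * h y) = ∑ x, P x * (kernelProj P K x * h x) := by
  rw [← sum_sum_kernel_mul_left]
  simp only [mul_sum]
  rw [sum_comm]
  simp only [mul_left_comm (P _) (P _), Sym2.eq_swap]

lemma kernelMean_mul_kernelDegenerate (L K : Sym2 (Fin n) → ℝ) :
    kernelMean P (fun z => L z * kernelDegenerate P K z)
      = kernelMean P (fun z => L z * K z) - 2 * ∑ x, P x * (kernelProj P L x * kernelProj P K x)
        + kernelMean P L * kernelMean P K := by
  have hexpand : ∀ x y, L s(x, y) * kernelDegenerate P K s(x, y)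
      = L s(x, y) * K s(x, y) - L s(x, y) * kernelProj P K x - L s(x, y) * kernelProj P K y
        + L s(x, y) * kernelMean P K := fun x y => by rw [kernelDegenerate_mk]; ring
  calc kernelMean P (fun z => L z * kernelDegenerate P K z)
      = kernelMean P (fun z => L z * K z)
        - ∑ x, P x * ∑ y, P y * (L s(x, y) * kernelProj P K x)
        - ∑ x, P x * ∑ y, P y * (L s(x, y) * kernelProj P K y)
        + ∑ x, P x * ∑ y, P y * (L s(x, y) * kernelMean P K) := by
        simp only [kernelMean, kernelProj, hexpand, mul_add, mul_sub, sum_add_distrib,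
          sum_sub_distrib]
    _ = _ := by
        rw [sum_sum_kernel_mul_left, sum_sum_kernel_mul_right,
          sum_sum_kernel_mul_left L fun _ => kernelMean P K]
        simp only [← mul_assoc, ← sum_mul]
        simp only [mul_assoc, kernelMean]
        ring

lemma kernelMean_kernelDegenerate_sq (hP : ∑ i, P i = 1) (K : Sym2 (Fin n) → ℝ) :
    kernelMean P (fun z => kernelDegenerate P K z ^ 2)
      = kernelMean P (fun z => K z ^ 2) - 2 * ∑ x, P x * kernelProj P K x ^ 2
        + kernelMean P K ^ 2 := by
  have hproj : kernelProj P (kernelDegenerate P K) = 0 :=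
    funext fun x => sum_mul_kernelDegenerate hP K x
  have hmean : kernelMean P (kernelDegenerate P K) = 0 := by
    simp only [kernelMean, hproj, Pi.zero_apply, mul_zero, sum_const_zero]
  have hself : kernelMean P (fun z => kernelDegenerate P K z ^ 2)
      = kernelMean P (fun z => K z * kernelDegenerate P K z) := by
    simp only [sq, kernelMean_mul_kernelDegenerate, hproj, hmean, Pi.zero_apply, zero_mul,
      mul_zero, sum_const_zero, sub_zero, add_zero, mul_comm (K _)]
  rw [hself, kernelMean_mul_kernelDegenerate]
  simp only [sq]

end Kernel

section Graph

variable {V : Type*}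

lemma coe_ne_singleton_of_not_isDiag {e : Sym2 V} (he : ¬ e.IsDiag) (v : V) :
    (e : Set V) ≠ {v} := by
  induction e with | _ a b
  intro h
  have ha : a ∈ ({v} : Set V) := h ▸ Sym2.mem_mk_left a b
  have hb : b ∈ ({v} : Set V) := h ▸ Sym2.mem_mk_right a b
  exact he (ha.trans hb.symm)

variable [Fintype V] [DecidableEq V] (G : SimpleGraph V) [DecidableRel G.Adj]

lemma sum_filter_mem_sym2 {a b : V} (hab : a ≠ b) (g : V → ℝ) :
    ∑ v with v ∈ s(a, b), g v = g a + g b := by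
  rw [← sum_pair hab]
  congr 1
  ext v
  simp

lemma sum_edgeFinset_sum_mem (g : V → ℝ) :
    ∑ e ∈ G.edgeFinset, ∑ v with v ∈ e, g v = ∑ v, G.degree v * g v := by
  simp only [sum_filter]
  rw [sum_comm]
  refine sum_congr rfl fun v _ => ?_
  rw [← sum_filter, sum_const, nsmul_eq_mul, ← G.incidenceFinset_eq_filter,
    G.card_incidenceFinset_eq_degree]

lemma sum_degree_sq :
    ∑ v, (G.degree v : ℝ) ^ 2 = twoPaths G + 2 * edgeCount G := by
  have hsq : ∑ v, G.degree v ^ 2 = twoPaths G + ∑ v, G.degree v := by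
    rw [twoPaths, ← sum_add_distrib]
    refine sum_congr rfl fun v _ => ?_
    cases G.degree v with
    | zero => rfl
    | succ d => rw [Nat.add_sub_cancel]; ring
  rw [G.sum_degrees_eq_twice_card_edges] at hsq
  exact_mod_cast hsq

end Graph

section EdgeSum

variable {V : Type*} [DecidableEq V] {n : ℕ} {P : Fin n → ℝ}

/-- The graph-indexed U-statistic `∑_{{u,v} ∈ E} K(ω u, ω v)` of a symmetric kernel `K`. -/
def edgeSum [Fintype V] (G : SimpleGraph V) [DecidableRel G.Adj] (K : Sym2 (Fin n) → ℝ)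
    (ω : V → Fin n) : ℝ :=
  ∑ e ∈ G.edgeFinset, K (e.map ω)

variable [Fintype V] (G : SimpleGraph V) [DecidableRel G.Adj]

lemma ex_edgeSum (hP : ∑ i, P i = 1) (K : Sym2 (Fin n) → ℝ) :
    ex P (edgeSum G K) = edgeCount G * kernelMean P K := by
  calc ex P (edgeSum G K) = ∑ e ∈ G.edgeFinset, ex P (fun ω => K (e.map ω)) := ex_sum _ _
    _ = ∑ _e ∈ G.edgeFinset, kernelMean P K :=
        sum_congr rfl fun e he => ex_map_sym2 hP (G.not_isDiag_of_mem_edgeFinset he) K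
    _ = edgeCount G * kernelMean P K := by rw [sum_const, nsmul_eq_mul, edgeCount]

lemma edgeSum_sub_eq_add_edgeSum_kernelDegenerate (K : Sym2 (Fin n) → ℝ) (ω : V → Fin n) :
    edgeSum G K ω - edgeCount G * kernelMean P K
      = ∑ v, G.degree v * (kernelProj P K (ω v) - kernelMean P K)
        + edgeSum G (kernelDegenerate P K) ω := by
  have hedge : ∀ e ∈ G.edgeFinset, K (e.map ω) - kernelMean P K
      = ∑ v with v ∈ e, (kernelProj P K (ω v) - kernelMean P K)
        + kernelDegenerate P K (e.map ω) := by
    intro e he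
    have hdiag := G.not_isDiag_of_mem_edgeFinset he
    induction e with | _ a b
    rw [sum_filter_mem_sym2 (Sym2.mk_isDiag_iff.not.mp hdiag), Sym2.map_mk, kernelDegenerate_mk]
    ring
  calc edgeSum G K ω - edgeCount G * kernelMean P K
      = ∑ e ∈ G.edgeFinset, (K (e.map ω) - kernelMean P K) := by
        rw [sum_sub_distrib, sum_const, nsmul_eq_mul, edgeSum, edgeCount]
    _ = _ := by rw [sum_congr rfl hedge, sum_add_distrib, sum_edgeFinset_sum_mem, edgeSum]

lemma ex_sum_mul_apply_sq (hP : ∑ i, P i = 1) {g : Fin n → ℝ} (hg : ∑ x, P x * g x = 0)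
    (d : V → ℝ) :
    ex P (fun ω => (∑ v, d v * g (ω v)) ^ 2) = (∑ v, d v ^ 2) * ∑ x, P x * g x ^ 2 := by
  rw [ex_sum_sq_of_orthogonal fun u _ v _ huv =>
    ((IsHoeffdingComponent.apply hg u).const_mul (d u)).ex_mul_eq_zero hP
      ((IsHoeffdingComponent.apply hg v).const_mul (d v)) (Set.singleton_injective.ne huv), sum_mul]
  refine sum_congr rfl fun v _ => ?_
  simp only [mul_pow]
  rw [ex_const_mul, ex_apply hP v fun x => g x ^ 2]

lemma ex_edgeSum_sq (hP : ∑ i, P i = 1) {K : Sym2 (Fin n) → ℝ}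
    (hK : ∀ x, ∑ y, P y * K s(x, y) = 0) :
    ex P (fun ω => edgeSum G K ω ^ 2) = edgeCount G * kernelMean P (fun z => K z ^ 2) := by
  have hcomponent : ∀ e ∈ G.edgeFinset,
      IsHoeffdingComponent P (e : Set V) (fun ω => K (e.map ω)) := fun e he =>
    .map_sym2 hK (G.not_isDiag_of_mem_edgeFinset he)
  simp only [edgeSum]
  rw [ex_sum_sq_of_orthogonal fun e he f hf hef =>
    (hcomponent e he).ex_mul_eq_zero hP (hcomponent f hf) (SetLike.coe_injective.ne hef)]
  rw [← ex_edgeSum G hP]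
  exact (ex_sum _ _).symm

lemma ex_sum_mul_apply_mul_edgeSum (hP : ∑ i, P i = 1) {g : Fin n → ℝ}
    (hg : ∑ x, P x * g x = 0) (d : V → ℝ) {K : Sym2 (Fin n) → ℝ}
    (hK : ∀ x, ∑ y, P y * K s(x, y) = 0) :
    ex P (fun ω => (∑ v, d v * g (ω v)) * edgeSum G K ω) = 0 := by
  simp only [edgeSum, sum_mul_sum, ex_sum]
  refine sum_eq_zero fun v _ => sum_eq_zero fun e he => ?_
  have hdiag := G.not_isDiag_of_mem_edgeFinset he
  exact ((IsHoeffdingComponent.apply hg v).const_mul (d v)).ex_mul_eq_zero hP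
    (.map_sym2 hK hdiag) (coe_ne_singleton_of_not_isDiag hdiag v).symm

theorem var_edgeSum (hP : ∑ i, P i = 1) (K : Sym2 (Fin n) → ℝ) :
    var P (edgeSum G K)
      = edgeCount G * (kernelMean P (fun z => K z ^ 2) - kernelMean P K ^ 2)
        + twoPaths G * (∑ x, P x * kernelProj P K x ^ 2 - kernelMean P K ^ 2) := by
  have hg := sum_mul_kernelProj_sub_kernelMean hP K
  have hD := sum_mul_kernelDegenerate hP K
  have hsplit : var P (edgeSum G K)
      = ex P (fun ω => (∑ v, G.degree v * (kernelProj P K (ω v) - kernelMean P K)) ^ 2)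
        + ex P (fun ω => edgeSum G (kernelDegenerate P K) ω ^ 2) := by
    simp only [var, ex_edgeSum G hP, edgeSum_sub_eq_add_edgeSum_kernelDegenerate, add_sq, ex_add,
      mul_assoc, ex_const_mul, ex_sum_mul_apply_mul_edgeSum G hP hg _ hD, mul_zero, add_zero]
  rw [hsplit, ex_sum_mul_apply_sq hP hg, ex_edgeSum_sq G hP hD, sum_degree_sq,
    sum_mul_kernelProj_sub_kernelMean_sq hP, kernelMean_kernelDegenerate_sq hP]
  ring

end EdgeSum

section Uniformity

variable {n : ℕ}

/-- The squared `ℓ₂` distance of the vector `P` to the uniform vector. -/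
noncomputable def uniformDistSq (P : Fin n → ℝ) : ℝ :=
  ∑ i, (P i - 1 / n) ^ 2

variable {P : Fin n → ℝ}

lemma uniformDistSq_uniform : uniformDistSq (fun _ : Fin n => (1 : ℝ) / n) = 0 := by
  simp only [uniformDistSq, sub_self, zero_pow two_ne_zero, sum_const_zero]

lemma sum_uniform (hn : n ≠ 0) : ∑ _i : Fin n, (1 : ℝ) / n = 1 := by
  simp [hn]

lemma sum_sq_eq_add_uniformDistSq (hn : n ≠ 0) (hP : ∑ i, P i = 1) :
    ∑ i, P i ^ 2 = 1 / n + uniformDistSq P := by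
  have hexpand : ∀ i, P i ^ 2 = (P i - 1 / n) ^ 2 + P i * (2 / n) - 1 / n * (1 / n) :=
    fun i => by ring
  simp only [hexpand, sum_add_distrib, sum_sub_distrib, ← sum_mul, hP, sum_uniform hn,
    uniformDistSq]
  ring

lemma sum_cube_le_sqrt_sum_sq_cube {ι : Type*} (s : Finset ι) (q : ι → ℝ) :
    ∑ i ∈ s, q i ^ 3 ≤ √(∑ i ∈ s, q i ^ 2) ^ 3 := by
  calc ∑ i ∈ s, q i ^ 3 ≤ ∑ i ∈ s, q i ^ 2 * √(∑ i ∈ s, q i ^ 2) := by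
        refine sum_le_sum fun i hi => ?_
        rw [pow_succ]
        refine mul_le_mul_of_nonneg_left (Real.le_sqrt_of_sq_le ?_) (sq_nonneg _)
        exact single_le_sum (f := fun i => q i ^ 2) (fun j _ => sq_nonneg _) hi
    _ = √(∑ i ∈ s, q i ^ 2) ^ 3 := by
        rw [← sum_mul, pow_succ _ 2, Real.sq_sqrt (sum_nonneg fun i _ => sq_nonneg _)]

lemma sum_cube_sub_sq_le (hP : ∑ i, P i = 1) :
    ∑ i, P i ^ 3 - (∑ i, P i ^ 2) ^ 2 ≤ uniformDistSq P / n + √(uniformDistSq P) ^ 3 := by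
  -- The left side is the variance of `P i` for `i` of law `P`; recentre it at `1 / n`.
  have hrecentre : ∑ i, P i ^ 3 - (∑ i, P i ^ 2) ^ 2
      = ∑ i, P i * (P i - 1 / n) ^ 2 - (∑ i, P i ^ 2 - 1 / n) ^ 2 := by
    have hexpand : ∀ i, P i * (P i - 1 / n) ^ 2
        = P i ^ 3 - P i ^ 2 * (2 / n) + P i * (1 / n) ^ 2 := fun i => by ring
    simp only [hexpand, sum_add_distrib, sum_sub_distrib, ← sum_mul, hP]
    ring
  calc ∑ i, P i ^ 3 - (∑ i, P i ^ 2) ^ 2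
      ≤ ∑ i, P i * (P i - 1 / n) ^ 2 := by
        rw [hrecentre]
        exact sub_le_self _ (sq_nonneg _)
    _ = uniformDistSq P / n + ∑ i, (P i - 1 / n) ^ 3 := by
        rw [uniformDistSq, sum_div, ← sum_add_distrib]
        exact sum_congr rfl fun i _ => by ring
    _ ≤ uniformDistSq P / n + √(uniformDistSq P) ^ 3 := by
        gcongr
        exact sum_cube_le_sqrt_sum_sq_cube univ fun i => P i - 1 / n

lemma sq_le_mul_uniformDistSq {ε : ℝ} (hε : 0 ≤ ε) (hfar : ε ≤ ∑ i, |P i - 1 / (n : ℝ)|) :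
    ε ^ 2 ≤ n * uniformDistSq P := by
  calc ε ^ 2 ≤ (∑ i, |P i - 1 / (n : ℝ)|) ^ 2 := by gcongr
    _ ≤ n * uniformDistSq P := by
      simpa only [uniformDistSq, sq_abs, card_univ, Fintype.card_fin] using
        sq_sum_le_card_mul_sum_sq (s := univ) (f := fun i => |P i - 1 / (n : ℝ)|)

end Uniformity

section Collisions

variable {V : Type*} [Fintype V] [DecidableEq V] {n : ℕ} {P : Fin n → ℝ}
  (G : SimpleGraph V) [DecidableRel G.Adj]

/-- The kernel `1[x = y]` whose edge sum is the collision count. -/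
def collisionKernel (z : Sym2 (Fin n)) : ℝ :=
  if z.IsDiag then 1 else 0

lemma collisions_eq_edgeSum : (collisions G : (V → Fin n) → ℝ) = edgeSum G collisionKernel := by
  funext ω
  refine sum_congr rfl fun e _ => ?_
  induction e with | _ a b
  simp only [Sym2.lift_mk, Sym2.map_mk, collisionKernel, Sym2.mk_isDiag_iff]

lemma kernelProj_collisionKernel : kernelProj P collisionKernel = P := by
  funext x
  simp [kernelProj, collisionKernel]

lemma kernelMean_collisionKernel : kernelMean P collisionKernel = ∑ i, P i ^ 2 := by
  simp only [kernelMean, kernelProj_collisionKernel, sq]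

lemma collisionKernel_sq (z : Sym2 (Fin n)) : collisionKernel z ^ 2 = collisionKernel z := by
  simp [collisionKernel]

lemma ex_collisions (hP : ∑ i, P i = 1) :
    ex P (fun ω : V → Fin n => collisions G ω) = edgeCount G * ∑ i, P i ^ 2 := by
  rw [collisions_eq_edgeSum, ex_edgeSum G hP, kernelMean_collisionKernel]

lemma var_collisions (hP : ∑ i, P i = 1) :
    var P (fun ω : V → Fin n => collisions G ω)
      = edgeCount G * (∑ i, P i ^ 2 - (∑ i, P i ^ 2) ^ 2)
        + twoPaths G * (∑ i, P i ^ 3 - (∑ i, P i ^ 2) ^ 2) := by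
  simp only [collisions_eq_edgeSum, var_edgeSum G hP, collisionKernel_sq,
    kernelMean_collisionKernel, kernelProj_collisionKernel, pow_succ' _ 2]

lemma var_collisions_le (hn : n ≠ 0) (hP : ∑ i, P i = 1) :
    var P (fun ω : V → Fin n => collisions G ω)
      ≤ edgeCount G * (1 / n + uniformDistSq P)
        + twoPaths G * (uniformDistSq P / n + √(uniformDistSq P) ^ 3) := by
  rw [var_collisions G hP]
  gcongr
  · rw [← sum_sq_eq_add_uniformDistSq hn hP]
    exact sub_le_self _ (sq_nonneg _)
  · exact sum_cube_sub_sq_le hP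

end Collisions

section Tester

lemma mul_inv_add_le_of_sq_le {m n k ε S : ℝ} (hn : 0 < n) (hm : 0 ≤ m) (hk : 0 ≤ k) (hε0 : 0 ≤ ε)
    (hε1 : ε ≤ 1) (hS : ε ^ 2 ≤ n * S) (hedges : 16 * n ≤ m * (k * ε ^ 4)) :
    m * (1 / n + S) ≤ k * (m * S) ^ 2 / 8 := by
  have hS0 : 0 ≤ S := nonneg_of_mul_nonneg_right ((sq_nonneg ε).trans hS) hn
  have hconst : 16 * n ≤ m * k * (n * S) ^ 2 :=
    calc 16 * n ≤ m * k * (ε ^ 2) ^ 2 := by linarith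
      _ ≤ m * k * (n * S) ^ 2 := by gcongr
  have hlinear : 16 * n ≤ m * k * (n * S) :=
    calc 16 * n ≤ m * k * ε ^ 4 := by linarith
      _ ≤ m * k * ε ^ 2 := by
        gcongr m * k * ?_
        exact pow_le_pow_of_le_one hε0 hε1 (by norm_num)
      _ ≤ m * k * (n * S) := by gcongr
  calc m * (1 / n + S)
      = m * (16 * n) / (16 * n ^ 2) + m * S * (16 * n) / (16 * n) := by field_simp
    _ ≤ m * (m * k * (n * S) ^ 2) / (16 * n ^ 2) + m * S * (m * k * (n * S)) / (16 * n) := by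
        gcongr
    _ = k * (m * S) ^ 2 / 8 := by field_simp; ring

lemma mul_div_add_sqrt_cube_le_of_sq_le {c m n k ε S : ℝ} (hn : 1 ≤ n) (hk : 0 ≤ k)
    (hε0 : 0 ≤ ε) (hε1 : ε ≤ 1) (hS : ε ^ 2 ≤ n * S)
    (hpaths : c * (16 * √n) ≤ k * ε ^ 2 * m ^ 2) :
    c * (S / n + √S ^ 3) ≤ k * (m * S) ^ 2 / 8 := by
  have hn0 : 0 < n := by linarith
  have hS0 : 0 ≤ S := nonneg_of_mul_nonneg_right ((sq_nonneg ε).trans hS) hn0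
  have hr : 1 ≤ √n := Real.one_le_sqrt.mpr hn
  have hpaths_linear : c * (16 * √n) ≤ k * (n * S) * m ^ 2 := hpaths.trans (by gcongr)
  have hlinear : c * (S / n) ≤ k * (m * S) ^ 2 / 16 :=
    calc c * (S / n) = S / n * (c * (16 * √n)) / (16 * √n) := by field_simp
      _ ≤ S / n * (k * (n * S) * m ^ 2) / (16 * √n) := by gcongr S / n * ?_ / _
      _ ≤ S / n * (k * (n * S) * m ^ 2) / (16 * 1) := by gcongr
      _ = k * (m * S) ^ 2 / 16 := by field_simp
  have hεr : ε ^ 2 ≤ √n * √S :=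
    calc ε ^ 2 ≤ ε := pow_le_of_le_one hε0 hε1 two_ne_zero
      _ ≤ √(n * S) := Real.le_sqrt_of_sq_le hS
      _ = √n * √S := Real.sqrt_mul hn0.le S
  have hpaths_cube : c * (16 * √n) ≤ k * (√n * √S) * m ^ 2 := hpaths.trans (by gcongr)
  have hcube : c * √S ^ 3 ≤ k * (m * S) ^ 2 / 16 :=
    calc c * √S ^ 3 = √S ^ 3 * (c * (16 * √n)) / (16 * √n) := by field_simp
      _ ≤ √S ^ 3 * (k * (√n * √S) * m ^ 2) / (16 * √n) := by gcongr √S ^ 3 * ?_ / _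
      _ = k * (m * √S ^ 2) ^ 2 / 16 := by field_simp
      _ = k * (m * S) ^ 2 / 16 := by rw [Real.sq_sqrt hS0]
  linarith

variable {V : Type*} [Fintype V] [DecidableEq V] {n : ℕ} {ε τ : ℝ}
  {G : SimpleGraph V} [DecidableRel G.Adj]

theorem three_quarters_le_pr_collisions_lt_of_uniform (hn : n ≠ 0) (hε : 0 < ε) (hτ : 0 < τ)
    (hedges : 4 * (n : ℝ) / (τ ^ 2 * ε ^ 4) ≤ edgeCount G) :
    3 / 4 ≤ pr (fun _ : Fin n => (1 : ℝ) / n)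
      (fun ω : V → Fin n => collisions G ω < edgeCount G * (1 + τ * ε ^ 2) / n) := by
  have hm : (0 : ℝ) < edgeCount G := lt_of_lt_of_le (by positivity) hedges
  have hU := sum_uniform hn
  have hmean := ex_collisions G hU
  have hvar := var_collisions_le G hn hU
  rw [sum_sq_eq_add_uniformDistSq hn hU, uniformDistSq_uniform, add_zero] at hmean
  simp only [uniformDistSq_uniform, Real.sqrt_zero, zero_div, add_zero, mul_zero,
    zero_pow three_ne_zero] at hvar
  refine three_quarters_le_pr_of_four_mul_var_le (fun _ => by positivity) hU
    (f := collisions G) (a := edgeCount G * (τ * ε ^ 2) / n) (by positivity) ?_ fun ω hω => ?_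
  · rw [div_le_iff₀ (by positivity)] at hedges
    calc 4 * var _ (collisions G) ≤ 4 * (edgeCount G * (1 / n)) := by gcongr
      _ = edgeCount G * (4 * n) / n ^ 2 := by field_simp
      _ ≤ edgeCount G * (edgeCount G * (τ ^ 2 * ε ^ 4)) / n ^ 2 := by gcongr
      _ = (edgeCount G * (τ * ε ^ 2) / n) ^ 2 := by ring
  · refine le_trans ?_ (le_abs_self _)
    rw [hmean, le_sub_iff_add_le]
    calc edgeCount G * (τ * ε ^ 2) / n + edgeCount G * (1 / n)
        = edgeCount G * (1 + τ * ε ^ 2) / n := by ring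
      _ ≤ collisions G ω := not_lt.mp hω

theorem three_quarters_le_pr_le_collisions_of_far {P : Fin n → ℝ} (hn : n ≠ 0) (hε0 : 0 < ε)
    (hε1 : ε ≤ 1) (hτ0 : 0 ≤ τ) (hτ1 : τ < 1)
    (hedges : 16 * (n : ℝ) / ((1 - τ) ^ 2 * ε ^ 4) ≤ edgeCount G)
    (hpaths : (twoPaths G : ℝ) / (edgeCount G : ℝ) ^ 2 ≤ (1 - τ) ^ 2 * ε ^ 2 / (16 * √n))
    (hP0 : ∀ i, 0 ≤ P i) (hP : ∑ i, P i = 1) (hfar : ε ≤ ∑ i, |P i - 1 / (n : ℝ)|) :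
    3 / 4 ≤ pr P
      (fun ω : V → Fin n => edgeCount G * (1 + τ * ε ^ 2) / n ≤ collisions G ω) := by
  have hn0 : (0 : ℝ) < n := by positivity
  have hn1 : (1 : ℝ) ≤ n := by exact_mod_cast Nat.one_le_iff_ne_zero.mpr hn
  have hτ : 0 < 1 - τ := sub_pos.mpr hτ1
  have hm : (0 : ℝ) < edgeCount G := lt_of_lt_of_le (by positivity) hedges
  rw [div_le_iff₀ (by positivity)] at hedges
  rw [div_le_div_iff₀ (by positivity) (by positivity)] at hpaths
  have hdist := sq_le_mul_uniformDistSq hε0.le hfar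
  have hdist_pos : 0 < uniformDistSq P :=
    pos_of_mul_pos_right ((pow_pos hε0 2).trans_le hdist) hn0.le
  have hmean := ex_collisions G hP
  rw [sum_sq_eq_add_uniformDistSq hn hP] at hmean
  refine three_quarters_le_pr_of_four_mul_var_le hP0 hP (f := collisions G)
    (a := (1 - τ) * (edgeCount G * uniformDistSq P)) (by positivity) ?_ fun ω hω => ?_
  · have hedge_term :=
      mul_inv_add_le_of_sq_le hn0 hm.le (sq_nonneg (1 - τ)) hε0.le hε1 hdist hedges
    have hpath_term :=
      mul_div_add_sqrt_cube_le_of_sq_le hn1 (sq_nonneg (1 - τ)) hε0.le hε1 hdist hpaths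
    linarith [var_collisions_le G hn hP]
  · refine le_trans ?_ (neg_le_abs _)
    have hthreshold : edgeCount G * (1 + τ * ε ^ 2) / n
        ≤ edgeCount G * (1 / n + τ * uniformDistSq P) :=
      calc edgeCount G * (1 + τ * ε ^ 2) / n
          ≤ edgeCount G * (1 + τ * (n * uniformDistSq P)) / n := by gcongr
        _ = edgeCount G * (1 / n + τ * uniformDistSq P) := by field_simp
    rw [hmean]
    linarith [not_le.mp hω]

end Tester

/-- Structural theorem: if `|E| ≥ 4n/(τ²ε⁴)`, `|E| ≥ 16n/((1−τ)²ε⁴)` and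
`c(G)/|E|² ≤ (1−τ)²ε²/(16√n)`, then `(G, τ)` is an `(n, ε)`-uniformity tester. -/
theorem structural_theorem {V : Type*} [Fintype V] [DecidableEq V] (n : ℕ) (hn : 2 ≤ n)
    (ε τ : ℝ) (hε0 : 0 < ε) (hε1 : ε ≤ 1) (hτ0 : 0 < τ) (hτ1 : τ < 1)
    (G : SimpleGraph V) [DecidableRel G.Adj]
    (h1 : 4 * (n : ℝ) / (τ ^ 2 * ε ^ 4) ≤ (edgeCount G : ℝ))
    (h2 : 16 * (n : ℝ) / ((1 - τ) ^ 2 * ε ^ 4) ≤ (edgeCount G : ℝ))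
    (h3 : (twoPaths G : ℝ) / (edgeCount G : ℝ) ^ 2
        ≤ (1 - τ) ^ 2 * ε ^ 2 / (16 * Real.sqrt n)) :
    IsUniformityTester n ε τ G := by
  have hn0 : n ≠ 0 := by omega
  exact ⟨three_quarters_le_pr_collisions_lt_of_uniform hn0 hε0 hτ0 h1, fun _P hP0 hP hfar =>
    three_quarters_le_pr_le_collisions_of_far hn0 hε0 hε1 hτ0.le hτ1 h2 h3 hP0 hP hfar⟩
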